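/- (Polynomial approximations of negative power functions) Let ε, δ ∈ (0, 1/2], let c > 0, and define f(x) = (δ^c / 2)·x^{−c} for x ∈ [δ, 1]. There is a universal constant K > 0 such that there exist an even real polynomial P and an odd real polynomial P′, each of degree at most K·(max(1,c)/δ)·log(1/ε), satisfying |P(x) − f(x)| ≤ ε and |P′(x) − f(x)| ≤ ε for all x ∈ [δ, 1], and |P(x)| ≤ 1 and |P′(x)| ≤ 1 for all x ∈ [−1, 1]. -/

import Mathlib

open Polynomial

namespace NegPow

lemma int_cos (k : ℤ) (hk : k ≠ 0) (α : ℝ) :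
    ∫ φ in (0:ℝ)..(2 * Real.pi), Real.cos (α + k * φ) = 0 := by
  have hk' : (k : ℝ) ≠ 0 := by exact_mod_cast hk
  rw [intervalIntegral.integral_comp_add_mul (fun x => Real.cos x) hk' α, integral_cos,
    Real.sin_add_int_mul_two_pi]
  simp

/-- weights of the Fejer kernel -/
noncomputable def wt (i : ℕ) : ℝ := if i = 0 then 1 else 2

lemma int_cos_cos (i j : ℕ) (θ : ℝ) :
    ∫ φ in (0:ℝ)..(2 * Real.pi), Real.cos (j * (θ + φ)) * (wt i * Real.cos (i * φ))
      = if i = j then 2 * Real.pi * Real.cos (j * θ) else 0 := by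
  have h : ∀ φ : ℝ, Real.cos (j * (θ + φ)) * (wt i * Real.cos (i * φ)) =
      (wt i / 2) * (Real.cos (j * θ + ((j + i : ℤ) : ℝ) * φ) +
        Real.cos (j * θ + ((j - i : ℤ) : ℝ) * φ)) := by
    intro φ
    push_cast
    rw [show (j * θ + ((j:ℝ) + i) * φ) = j * (θ + φ) + i * φ by ring,
      show (j * θ + ((j:ℝ) - i) * φ) = j * (θ + φ) - i * φ by ring, Real.cos_add, Real.cos_sub]
    ring
  simp_rw [h]
  rw [intervalIntegral.integral_const_mul, intervalIntegral.integral_add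
    (Continuous.intervalIntegrable (by fun_prop) _ _)
    (Continuous.intervalIntegrable (by fun_prop) _ _)]
  by_cases hij : i = j
  · subst hij
    by_cases hi : i = 0
    · subst hi
      simp [wt]; ring
    · rw [int_cos _ (by omega)]
      simp [wt, hi]
  · rw [int_cos _ (by omega), int_cos _ (by omega)]
    simp [hij]

noncomputable def fej (m : ℕ) (φ : ℝ) : ℝ :=
  ∑ i ∈ Finset.range m, ((m : ℝ) - i) * (wt i * Real.cos (i * φ))

lemma dir_id (m : ℕ) (φ : ℝ) :
    (1 - Real.cos φ) * ∑ i ∈ Finset.range (m + 1), wt i * Real.cos (i * φ)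
      = Real.cos (m * φ) - Real.cos ((m + 1) * φ) := by
  induction m with
  | zero => simp [wt]
  | succ m ih =>
    rw [Finset.sum_range_succ, mul_add, ih]
    have h1 : Real.cos ((((m + 1 : ℕ) : ℝ) + 1) * φ) =
      Real.cos ((m+1) * φ) * Real.cos φ - Real.sin ((m+1) * φ) * Real.sin φ := by
      rw [← Real.cos_add]; congr 1; push_cast; ring
    have h2 : Real.cos (m * φ) =
      Real.cos ((m+1) * φ) * Real.cos φ + Real.sin ((m+1) * φ) * Real.sin φ := by
      rw [← Real.cos_sub]; congr 1; ring
    rw [h1, h2]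
    simp only [wt, Nat.succ_ne_zero, if_false]
    push_cast
    ring

lemma fej_succ (m : ℕ) (φ : ℝ) :
    fej (m + 1) φ = fej m φ + ∑ i ∈ Finset.range (m + 1), wt i * Real.cos (i * φ) := by
  unfold fej
  rw [Finset.sum_range_succ, Finset.sum_range_succ, ← add_assoc, ← Finset.sum_add_distrib]
  congr 1
  · apply Finset.sum_congr rfl; intros; push_cast; ring
  · push_cast; ring

lemma fej_id (m : ℕ) (φ : ℝ) : (1 - Real.cos φ) * fej m φ = 1 - Real.cos (m * φ) := by
  induction m with
  | zero => simp [fej]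
  | succ m ih =>
    rw [fej_succ, mul_add, ih, dir_id]; push_cast; ring

lemma fej_nonneg (m : ℕ) (φ : ℝ) : 0 ≤ fej m φ := by
  by_cases h : Real.cos φ = 1
  · apply Finset.sum_nonneg
    intro i hi
    have h1 : Real.cos (i * φ) = 1 := by
      have := Polynomial.Chebyshev.T_real_cos φ i
      rw [h, Polynomial.Chebyshev.T_eval_one] at this
      exact_mod_cast this.symm
    have h2 : (i : ℝ) ≤ m := by exact_mod_cast (Finset.mem_range.1 hi).le
    have h3 : 0 ≤ wt i := by unfold wt; split_ifs <;> norm_num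
    rw [h1]
    have : 0 ≤ (m : ℝ) - i := by linarith
    positivity
  · have h1 : 0 < 1 - Real.cos φ := by
      have := Real.cos_le_one φ
      rcases lt_or_eq_of_le this with h' | h'
      · linarith
      · exact absurd h' h
    have h2 := fej_id m φ
    have h3 := Real.cos_le_one (m * φ)
    by_contra hc
    push Not at hc
    nlinarith

lemma fej_cont (m : ℕ) : Continuous (fej m) := by
  unfold fej; fun_prop

/-- Fejer means with truncation `m` -/
lemma fej_conv (J m : ℕ) (g : ℕ → ℝ) (θ : ℝ) :
    ∫ φ in (0:ℝ)..(2 * Real.pi), (∑ j ∈ Finset.range J, g j * Real.cos (j * (θ + φ))) * fej m φ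
      = 2 * Real.pi * ∑ j ∈ Finset.range J, g j * ((m - j : ℕ) : ℝ) * Real.cos (j * θ) := by
  unfold fej
  simp_rw [Finset.sum_mul_sum]
  rw [intervalIntegral.integral_finsetSum
    (fun i _ => Continuous.intervalIntegrable (by fun_prop) _ _), Finset.mul_sum]
  apply Finset.sum_congr rfl
  intro j hj
  rw [intervalIntegral.integral_finsetSum
    (fun i _ => Continuous.intervalIntegrable (by fun_prop) _ _)]
  have h : ∀ i : ℕ, ∫ φ in (0:ℝ)..(2 * Real.pi),
      g j * Real.cos (j * (θ + φ)) * (((m : ℝ) - i) * (wt i * Real.cos (i * φ)))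
      = if i = j then g j * ((m : ℝ) - i) * (2 * Real.pi * Real.cos (j * θ)) else 0 := by
    intro i
    have := int_cos_cos i j θ
    rw [show (fun φ : ℝ => g j * Real.cos (j * (θ + φ)) * (((m : ℝ) - i) * (wt i * Real.cos (i * φ))))
      = fun φ => (g j * ((m : ℝ) - i)) * (Real.cos (j * (θ + φ)) * (wt i * Real.cos (i * φ))) by
        funext φ; ring, intervalIntegral.integral_const_mul, this]
    split_ifs <;> simp
  simp_rw [h]
  rw [Finset.sum_ite_eq']
  split_ifs with hjm
  · rw [Nat.cast_sub (Finset.mem_range.1 hjm).le]; ring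
  · have : m - j = 0 := by simp at hjm; omega
    rw [this]; simp

lemma fej_int (m : ℕ) : ∫ φ in (0:ℝ)..(2 * Real.pi), fej m φ = 2 * Real.pi * m := by
  have := fej_conv 1 m (fun _ => 1) 0
  simpa using this

lemma fej_bound (J m : ℕ) (g : ℕ → ℝ) (M : ℝ)
    (hM : ∀ θ : ℝ, |∑ j ∈ Finset.range J, g j * Real.cos (j * θ)| ≤ M) (θ : ℝ) :
    |∑ j ∈ Finset.range J, g j * ((m - j : ℕ) : ℝ) * Real.cos (j * θ)| ≤ m * M := by
  have h1 := fej_conv J m g θ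
  have h2 : |∫ φ in (0:ℝ)..(2 * Real.pi),
      (∑ j ∈ Finset.range J, g j * Real.cos (j * (θ + φ))) * fej m φ| ≤
      ∫ φ in (0:ℝ)..(2 * Real.pi), M * fej m φ := by
    refine (intervalIntegral.abs_integral_le_integral_abs Real.two_pi_pos.le).trans ?_
    apply intervalIntegral.integral_mono_on Real.two_pi_pos.le
    · have := fej_cont m
      exact Continuous.intervalIntegrable (by fun_prop) _ _
    · have := fej_cont m
      exact Continuous.intervalIntegrable (by fun_prop) _ _
    · intro φ _
      rw [abs_mul, abs_of_nonneg (fej_nonneg m φ)]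
      exact mul_le_mul_of_nonneg_right (hM _) (fej_nonneg m φ)
  rw [h1, intervalIntegral.integral_const_mul, fej_int, abs_mul, abs_of_pos Real.two_pi_pos] at h2
  have := Real.two_pi_pos
  have h3 : 2 * Real.pi * |∑ j ∈ Finset.range J, g j * ((m - j : ℕ) : ℝ) * Real.cos (j * θ)|
    ≤ 2 * Real.pi * (m * M) := by linarith
  exact le_of_mul_le_mul_left h3 this

lemma abel (c : ℕ → ℝ) (J j : ℕ) (hj : j ≤ J) :
    c j = c J + (c J - c (J + 1)) * ((J - j : ℕ) : ℝ) +
      ∑ m ∈ Finset.range J, (c m - 2 * c (m + 1) + c (m + 2)) * ((m + 1 - j : ℕ) : ℝ) := by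
  induction J, hj using Nat.le_induction with
  | base =>
    rw [Finset.sum_eq_zero]
    · simp
    · intro m hm
      have : m + 1 - j = 0 := by simp at hm; omega
      rw [this]; simp
  | succ J hj ih =>
    rw [Finset.sum_range_succ]
    have e1 : ((J + 1 - j : ℕ) : ℝ) = ((J - j : ℕ) : ℝ) + 1 := by
      rw [show J + 1 - j = (J - j) + 1 by omega]; push_cast; ring
    rw [e1]
    linear_combination ih

lemma conv_bound (J : ℕ) (g c : ℕ → ℝ) (M : ℝ)
    (hM : ∀ θ : ℝ, |∑ j ∈ Finset.range (J+1), g j * Real.cos (j * θ)| ≤ M)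
    (hpos : ∀ j, 0 ≤ c j) (hmono : ∀ j, c (j+1) ≤ c j)
    (hconv : ∀ j, 0 ≤ c j - 2 * c (j + 1) + c (j + 2)) (θ : ℝ) :
    |∑ j ∈ Finset.range (J+1), c j * g j * Real.cos (j * θ)| ≤ c 0 * M := by
  have h1 : ∑ j ∈ Finset.range (J+1), c j * g j * Real.cos (j * θ) =
      c J * (∑ j ∈ Finset.range (J+1), g j * Real.cos (j * θ)) +
      (c J - c (J + 1)) * (∑ j ∈ Finset.range (J+1), g j * ((J - j : ℕ) : ℝ) * Real.cos (j * θ)) +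
      ∑ m ∈ Finset.range J, (c m - 2 * c (m + 1) + c (m + 2)) *
        (∑ j ∈ Finset.range (J+1), g j * ((m + 1 - j : ℕ) : ℝ) * Real.cos (j * θ)) := by
    simp_rw [Finset.mul_sum]
    rw [Finset.sum_comm, ← Finset.sum_add_distrib, ← Finset.sum_add_distrib]
    apply Finset.sum_congr rfl
    intro j hj
    have := abel c J j (by simp at hj; omega)
    have h2 : ∑ m ∈ Finset.range J, (c m - 2 * c (m + 1) + c (m + 2)) *
        (g j * ((m + 1 - j : ℕ) : ℝ) * Real.cos (j * θ)) =
        (g j * Real.cos (j * θ)) *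
        ∑ m ∈ Finset.range J, (c m - 2 * c (m + 1) + c (m + 2)) * ((m + 1 - j : ℕ) : ℝ) := by
      rw [Finset.mul_sum]; apply Finset.sum_congr rfl; intros; ring
    rw [h2]
    linear_combination (g j * Real.cos (j * θ)) * this
  have h0 := abel c J 0 (Nat.zero_le _)
  simp only [Nat.sub_zero] at h0
  rw [h1]
  refine (abs_add_three _ _ _).trans ?_
  have a1 : |c J * (∑ j ∈ Finset.range (J+1), g j * Real.cos (j * θ))| ≤ c J * M := by
    rw [abs_mul, abs_of_nonneg (hpos J)]
    exact mul_le_mul_of_nonneg_left (hM θ) (hpos J)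
  have a2 : |(c J - c (J + 1)) *
      (∑ j ∈ Finset.range (J+1), g j * ((J - j : ℕ) : ℝ) * Real.cos (j * θ))| ≤
      (c J - c (J+1)) * (J * M) := by
    have := hmono J
    rw [abs_mul, abs_of_nonneg (by linarith : 0 ≤ c J - c (J+1))]
    exact mul_le_mul_of_nonneg_left (fej_bound _ _ _ _ hM θ) (by linarith)
  have a3 : |∑ m ∈ Finset.range J, (c m - 2 * c (m + 1) + c (m + 2)) *
        (∑ j ∈ Finset.range (J+1), g j * ((m + 1 - j : ℕ) : ℝ) * Real.cos (j * θ))| ≤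
      ∑ m ∈ Finset.range J, (c m - 2 * c (m + 1) + c (m + 2)) * (((m + 1 : ℕ) : ℝ) * M) := by
    refine (Finset.abs_sum_le_sum_abs _ _).trans ?_
    apply Finset.sum_le_sum
    intro m _
    rw [abs_mul, abs_of_nonneg (hconv m)]
    exact mul_le_mul_of_nonneg_left (fej_bound _ (m+1) _ _ hM θ) (hconv m)
  have a4 : ∑ m ∈ Finset.range J, (c m - 2 * c (m + 1) + c (m + 2)) * (((m + 1 : ℕ) : ℝ) * M)
    = (∑ m ∈ Finset.range J, (c m - 2 * c (m + 1) + c (m + 2)) * (((m + 1 : ℕ) : ℝ))) * M := by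
    rw [Finset.sum_mul]; apply Finset.sum_congr rfl; intros; ring
  rw [a4] at a3
  have : c 0 * M = c J * M + (c J - c (J+1)) * (J * M) +
    (∑ m ∈ Finset.range J, (c m - 2 * c (m + 1) + c (m + 2)) * (((m + 1 : ℕ) : ℝ))) * M := by
    linear_combination M * h0
  linarith


lemma cheb_mem (D : ℝ[X]) :
    D ∈ Submodule.span ℝ (Set.range (fun j : ℕ => Chebyshev.T ℝ (j : ℤ))) := by
  set S := Submodule.span ℝ (Set.range (fun j : ℕ => Chebyshev.T ℝ (j : ℤ))) with hS
  have hT : ∀ j : ℕ, Chebyshev.T ℝ (j : ℤ) ∈ S := fun j => Submodule.subset_span ⟨j, rfl⟩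
  have hX : ∀ p ∈ S, X * p ∈ S := by
    intro p hp
    induction hp using Submodule.span_induction with
    | mem x hx =>
      obtain ⟨j, rfl⟩ := hx
      rcases j with _ | j
      · have := hT 1
        simpa using this
      · have h1 := Chebyshev.T_add_two ℝ (j : ℤ)
        have h2 : X * Chebyshev.T ℝ (((j + 1 : ℕ)) : ℤ) = (1/2 : ℝ) •
          (Chebyshev.T ℝ (((j + 2 : ℕ)) : ℤ) + Chebyshev.T ℝ (j : ℤ)) := by
          push_cast
          rw [h1, smul_eq_C_mul]
          have : (C (1/2 : ℝ)) * 2 = (1 : ℝ[X]) := by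
            rw [show (2 : ℝ[X]) = C 2 from rfl, ← C_mul]; norm_num
          linear_combination (-X * Chebyshev.T ℝ (j + 1 : ℤ)) * this
        simp only
        rw [h2]
        exact S.smul_mem _ (S.add_mem (hT _) (hT _))
    | zero => simp
    | add x y _ _ hx hy => rw [mul_add]; exact S.add_mem hx hy
    | smul a x _ hx => rw [mul_smul_comm]; exact S.smul_mem _ hx
  have hpow : ∀ k : ℕ, (X : ℝ[X]) ^ k ∈ S := by
    intro k
    induction k with
    | zero => simpa using hT 0
    | succ k ih => rw [pow_succ']; exact hX _ ih
  rw [D.as_sum_range_C_mul_X_pow]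
  apply S.sum_mem
  intro k _
  rw [← smul_eq_C_mul]
  exact S.smul_mem _ (hpow k)

lemma cheb_exp (D : ℝ[X]) : ∃ (J : ℕ) (d : ℕ → ℝ),
    D = ∑ j ∈ Finset.range (J + 1), C (d j) * Chebyshev.T ℝ (j : ℤ) := by
  obtain ⟨d, hd⟩ := (Finsupp.mem_span_range_iff_exists_finsupp).1 (cheb_mem D)
  refine ⟨d.support.sup id, d, ?_⟩
  rw [← hd, Finsupp.sum]
  simp_rw [← smul_eq_C_mul]
  apply Finset.sum_subset
  · intro j hj
    have : j ≤ d.support.sup id := Finset.le_sup (f := id) hj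
    simp; omega
  · intro j _ hj
    have : d j = 0 := by simpa using hj
    simp [this]

noncomputable def cs (η : ℝ) (n j : ℕ) : ℝ :=
  if j < n then 1 / Real.cosh (n * η) +
    ((n : ℝ) - j) * (1 / Real.cosh (n * η) - 1 / Real.cosh ((n + 1 : ℕ) * η))
  else 1 / Real.cosh (j * η)

lemma sech_mono (η : ℝ) (hη : 0 < η) (j : ℕ) :
    1 / Real.cosh ((j + 1 : ℕ) * η) ≤ 1 / Real.cosh (j * η) := by
  apply one_div_le_one_div_of_le (Real.cosh_pos _)
  rw [Real.cosh_le_cosh, abs_of_nonneg (by positivity), abs_of_nonneg (by positivity)]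
  push_cast; nlinarith

lemma sech_conv (η : ℝ) (hη : 0 < η) (n : ℕ)
    (hn : Real.cosh η + 1 ≤ Real.cosh (n * η) ^ 2) (j : ℕ) (hj : n ≤ j) :
    0 ≤ 1 / Real.cosh (j * η) - 2 * (1 / Real.cosh ((j + 1 : ℕ) * η))
      + 1 / Real.cosh ((j + 2 : ℕ) * η) := by
  set C := Real.cosh ((j + 1 : ℕ) * η) with hC
  set S := Real.sinh ((j + 1 : ℕ) * η) with hS
  have e1 : Real.cosh (j * η) = C * Real.cosh η - S * Real.sinh η := by
    rw [hC, hS, ← Real.cosh_sub]; congr 1; push_cast; ring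
  have e2 : Real.cosh ((j + 2 : ℕ) * η) = C * Real.cosh η + S * Real.sinh η := by
    rw [hC, hS, ← Real.cosh_add]; congr 1; push_cast; ring
  have p1 := Real.cosh_pos (j * η)
  have p2 := Real.cosh_pos ((j + 2 : ℕ) * η)
  have p3 : 0 < C := Real.cosh_pos _
  have q1 : C ^ 2 = S ^ 2 + 1 := Real.cosh_sq _
  have q2 := Real.cosh_sq η
  have h1 := Real.one_le_cosh η
  have hC1 : Real.cosh (n * η) ≤ C := by
    rw [hC, Real.cosh_le_cosh, abs_of_nonneg (by positivity), abs_of_nonneg (by positivity)]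
    have : (n : ℝ) ≤ (j + 1 : ℕ) := by exact_mod_cast (by omega)
    nlinarith
  have hC2 : Real.cosh η + 1 ≤ C ^ 2 := by
    have := Real.cosh_pos (n * η)
    nlinarith
  have key : 1 / Real.cosh (j * η) - 2 * (1 / C) + 1 / Real.cosh ((j + 2 : ℕ) * η)
     = 2 * (Real.cosh η - 1) * (C ^ 2 - (Real.cosh η + 1)) /
       (Real.cosh (j * η) * C * Real.cosh ((j + 2 : ℕ) * η)) := by
    have n1 := p1.ne'
    have n2 := p2.ne'
    rw [e1] at n1 ⊢
    rw [e2] at n2 ⊢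
    field_simp
    have h5 : S^2 = C^2 - 1 := by linarith
    have h6 : Real.sinh η ^ 2 = Real.cosh η ^2 - 1 := by linarith
    linear_combination 2 * Real.sinh η ^ 2 * h5 + 2 * (C ^ 2 - 1) * h6
  rw [key]
  have : 0 ≤ Real.cosh η - 1 := by linarith
  have : 0 ≤ C ^ 2 - (Real.cosh η + 1) := by linarith
  positivity

lemma cs_mono (η : ℝ) (hη : 0 < η) (n : ℕ) (j : ℕ) : cs η n (j + 1) ≤ cs η n j := by
  have h := sech_mono η hη
  have hn := h n
  unfold cs
  by_cases h1 : j + 1 < n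
  · rw [if_pos h1, if_pos (by omega)]
    push_cast at *; nlinarith
  · by_cases h2 : j < n
    · have : j + 1 = n := by omega
      subst this
      simp only [lt_irrefl, if_false, Nat.lt_succ_self, if_true]
      push_cast at *; nlinarith
    · rw [if_neg h1, if_neg h2]; exact h j

lemma cs_pos (η : ℝ) (hη : 0 < η) (n : ℕ) (j : ℕ) : 0 ≤ cs η n j := by
  have hn := sech_mono η hη n
  have := Real.cosh_pos (n * η)
  have := Real.cosh_pos (j * η)
  unfold cs
  split_ifs with h
  · have : (j : ℝ) ≤ n := by exact_mod_cast h.le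
    have a : 0 ≤ (n : ℝ) - j := by linarith
    have b : 0 ≤ 1 / Real.cosh (n * η) - 1 / Real.cosh ((n + 1 : ℕ) * η) := by linarith
    positivity
  · positivity

lemma cs_conv (η : ℝ) (hη : 0 < η) (n : ℕ)
    (hn : Real.cosh η + 1 ≤ Real.cosh (n * η) ^ 2) (j : ℕ) :
    0 ≤ cs η n j - 2 * cs η n (j + 1) + cs η n (j + 2) := by
  unfold cs
  by_cases h1 : j + 2 < n
  · rw [if_pos h1, if_pos (by omega), if_pos (by omega)]
    push_cast; apply le_of_eq; ring
  · by_cases h2 : j + 1 < n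
    · have : j + 2 = n := by omega
      subst this
      rw [if_pos (by omega), if_pos (by omega), if_neg (by omega)]
      push_cast; apply le_of_eq; ring
    · by_cases h3 : j < n
      · have : j + 1 = n := by omega
        subst this
        rw [if_pos (by omega), if_neg (by omega), if_neg (by omega)]
        push_cast; apply le_of_eq; ring
      · rw [if_neg h1, if_neg h2, if_neg h3]
        exact sech_conv η hη n hn j (by omega)

lemma cs_zero (η : ℝ) (hη : 0 < η) (n : ℕ) :
    cs η n 0 ≤ (1 + n * η) / Real.cosh (n * η) := by
  have p := Real.cosh_pos (n * η)
  have p' := Real.cosh_pos ((n + 1 : ℕ) * η)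
  unfold cs
  split_ifs with h
  · have h1 : Real.cosh ((n + 1 : ℕ) * η) ≤ Real.exp η * Real.cosh (n * η) := by
      rw [show ((n + 1 : ℕ) : ℝ) * η = n * η + η by push_cast; ring, Real.cosh_add,
        ← Real.cosh_add_sinh η]
      have := Real.sinh_lt_cosh (n * η)
      have := Real.sinh_pos_iff.2 hη
      nlinarith
    have h2 : (1 - η) / Real.cosh (n * η) ≤ 1 / Real.cosh ((n + 1 : ℕ) * η) := by
      rw [div_le_div_iff₀ p p']
      have h3 : 1 - η ≤ Real.exp (-η) := by linarith [Real.add_one_le_exp (-η)]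
      have h4 : Real.exp (-η) * Real.exp η = 1 := by rw [← Real.exp_add]; simp
      calc (1 - η) * Real.cosh ((n + 1 : ℕ) * η) ≤ Real.exp (-η) * Real.cosh ((n + 1 : ℕ) * η) :=
            mul_le_mul_of_nonneg_right h3 p'.le
        _ ≤ Real.exp (-η) * (Real.exp η * Real.cosh (n * η)) :=
            mul_le_mul_of_nonneg_left h1 (Real.exp_pos _).le
        _ = 1 * Real.cosh (n * η) := by rw [← mul_assoc, h4]
    have h5 : 1 / Real.cosh (n * η) - 1 / Real.cosh ((n + 1 : ℕ) * η) ≤ η / Real.cosh (n * η) := by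
      rw [sub_div] at h2; linarith
    have h6 : (n : ℝ) * (1 / Real.cosh (n * η) - 1 / Real.cosh ((n + 1 : ℕ) * η)) ≤
      n * (η / Real.cosh (n * η)) := mul_le_mul_of_nonneg_left h5 (by positivity)
    rw [add_div, mul_div_assoc]
    simp only [Nat.cast_zero, sub_zero]
    linarith
  · have : n = 0 := by omega
    subst this
    simp

lemma reduction (D : ℝ[X]) (n : ℕ) (η M : ℝ) (hη : 0 < η)
    (hn : Real.cosh η + 1 ≤ Real.cosh (n * η) ^ 2)
    (hM : ∀ θ : ℝ, ‖aeval (Complex.cos (θ + η * Complex.I)) D‖ ≤ M) :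
    ∃ P : ℝ[X], P.natDegree ≤ n ∧ ∀ x ∈ Set.Icc (-1 : ℝ) 1,
      |P.eval x - D.eval x| ≤ (1 + n * η) / Real.cosh (n * η) * M := by
  obtain ⟨J, d, hd⟩ := cheb_exp D
  set g : ℕ → ℝ := fun j => d j * Real.cosh (j * η) with hg
  have hre : ∀ θ : ℝ, (aeval (Complex.cos (θ + η * Complex.I)) D).re =
      ∑ j ∈ Finset.range (J+1), g j * Real.cos (j * θ) := by
    intro θ
    rw [hd, map_sum, Complex.re_sum]
    apply Finset.sum_congr rfl
    intro j _
    have : aeval (Complex.cos (θ + η * Complex.I)) (Chebyshev.T ℝ (j : ℤ)) =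
        Complex.cos (j * (θ + η * Complex.I)) := by
      rw [Chebyshev.aeval_T, Chebyshev.T_complex_cos]; simp
    rw [map_mul, aeval_C, this]
    rw [show (j : ℂ) * (θ + η * Complex.I) = ((j * θ : ℝ) : ℂ) + ((j * η : ℝ) : ℂ) * Complex.I by
      push_cast; ring]
    rw [Complex.cos_add_mul_I, ← Complex.ofReal_cos, ← Complex.ofReal_cosh, ← Complex.ofReal_sin,
      ← Complex.ofReal_sinh]
    simp only [hg]
    generalize Real.cos (j * θ) = p1
    generalize Real.cosh (j * η) = p2
    generalize Real.sin (j * θ) = p3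
    generalize Real.sinh (j * η) = p4
    simp
    ring
  have hG : ∀ θ : ℝ, |∑ j ∈ Finset.range (J+1), g j * Real.cos (j * θ)| ≤ M := by
    intro θ
    rw [← hre]
    exact (Complex.abs_re_le_norm _).trans (hM θ)
  have hM0 : 0 ≤ M := (norm_nonneg _).trans (hM 0)
  set P : ℝ[X] := ∑ j ∈ Finset.range (J + 1),
    C (d j - cs η n j * g j) * Chebyshev.T ℝ (j : ℤ) with hP
  refine ⟨P, ?_, ?_⟩
  · apply natDegree_sum_le_of_forall_le
    intro j _
    by_cases hj : j < n
    · refine (natDegree_C_mul_le _ _).trans ?_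
      rw [Chebyshev.natDegree_T]; simp; omega
    · have : d j - cs η n j * g j = 0 := by
        simp only [cs, if_neg hj, hg]
        have := (Real.cosh_pos (j * η)).ne'
        field_simp
        ring
      rw [this]; simp
  · intro x hx
    obtain ⟨θ, hθ⟩ : ∃ θ, Real.cos θ = x := ⟨Real.arccos x, Real.cos_arccos hx.1 hx.2⟩
    have e : P.eval x - D.eval x =
        - ∑ j ∈ Finset.range (J+1), cs η n j * g j * Real.cos (j * θ) := by
      rw [hP, hd, eval_finsetSum, eval_finsetSum, ← Finset.sum_sub_distrib,
        ← Finset.sum_neg_distrib]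
      apply Finset.sum_congr rfl
      intro j _
      rw [← hθ, eval_mul, eval_mul, Chebyshev.T_real_cos, eval_C, eval_C]
      push_cast
      ring
    rw [e, abs_neg]
    refine (conv_bound J g (cs η n) M hG (cs_pos η hη n) (cs_mono η hη n)
      (cs_conv η hη n hn) θ).trans ?_
    exact mul_le_mul_of_nonneg_right (cs_zero η hη n) hM0


/-- coefficients -/
noncomputable def qc (N : ℕ) (a : ℝ) (r : ℕ) : ℝ :=
  (∏ i ∈ Finset.range r, ((N : ℝ) - i + a)) / (r.factorial : ℝ)

lemma qc_succ (N : ℕ) (a : ℝ) (r : ℕ) :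
    qc N a (r + 1) * ((r : ℝ) + 1) = qc N a r * ((N : ℝ) - r + a) := by
  unfold qc
  rw [Finset.prod_range_succ, Nat.factorial_succ]
  have : (r.factorial : ℝ) ≠ 0 := by positivity
  push_cast
  field_simp

lemma qc_pos (N : ℕ) (a : ℝ) (ha : 0 ≤ a) (r : ℕ) (hr : r ≤ N) : 0 < qc N a r := by
  unfold qc
  apply div_pos _ (by positivity)
  apply Finset.prod_pos
  intro i hi
  have : i < N := by simp at hi; omega
  have : (i : ℝ) < N := by exact_mod_cast this
  linarith

noncomputable def bt (N R : ℕ) (a u : ℝ) : ℝ :=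
  ∑ r ∈ Finset.range (R + 1), qc N a r * (u ^ (N - r) * (1 - u) ^ r)

noncomputable def kap (N R : ℕ) (a : ℝ) : ℝ := qc N a R * ((N : ℝ) - R + a)

lemma kap_pos (N R : ℕ) (a : ℝ) (ha : 0 ≤ a) (hR : R < N) : 0 < kap N R a := by
  have : (R : ℝ) < N := by exact_mod_cast hR
  exact mul_pos (qc_pos N a ha R hR.le) (by linarith)

lemma bt_nonneg (N R : ℕ) (a u : ℝ) (ha : 0 ≤ a) (hR : R < N) (h0 : 0 ≤ u) (h1 : u ≤ 1) :
    0 ≤ bt N R a u := by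
  apply Finset.sum_nonneg
  intro r hr
  have := qc_pos N a ha r (by simp at hr; omega)
  have : 0 ≤ 1 - u := by linarith
  positivity

lemma bt_one (N R : ℕ) (a : ℝ) : bt N R a 1 = 1 := by
  unfold bt
  rw [Finset.sum_eq_single 0]
  · simp [qc]
  · intro r _ hr; simp [hr]
  · simp

lemma bt_zero (N R : ℕ) (a : ℝ) (hR : R < N) : bt N R a 0 = 0 := by
  apply Finset.sum_eq_zero
  intro r hr
  have : N - r ≠ 0 := by simp at hr; omega
  simp [this]

lemma bt_cont (N R : ℕ) (a : ℝ) : Continuous (bt N R a) := by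
  unfold bt; fun_prop

lemma bt_deriv (N R : ℕ) (a u : ℝ) (hu : 0 < u) (hR : R < N) :
    ∃ b', HasDerivAt (bt N R a) b' u ∧
      a * bt N R a u + u * b' = kap N R a * (u ^ (N - R) * (1 - u) ^ R) := by
  induction R with
  | zero =>
    refine ⟨N * u ^ (N - 1), ?_, ?_⟩
    · have : bt N 0 a = fun u => u ^ N := by
        funext u; simp [bt, qc]
      rw [this]
      exact hasDerivAt_pow N u
    · simp [bt, qc, kap]
      have : u * u ^ (N - 1) = u ^ N := by
        rw [← pow_succ', Nat.sub_add_cancel (by omega)]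
      linear_combination (N : ℝ) * this
  | succ R ih =>
    obtain ⟨b', h1, h2⟩ := ih (by omega)
    obtain ⟨p, hp⟩ : ∃ p, N = p + 1 + R + 1 := ⟨N - R - 2, by omega⟩
    have hs : bt N (R + 1) a = fun u => bt N R a u +
        qc N a (R + 1) * (u ^ (N - (R + 1)) * (1 - u) ^ (R + 1)) := by
      funext u; unfold bt; rw [Finset.sum_range_succ]
    have e1 : N - (R + 1) = p + 1 := by omega
    have e2 : N - R = p + 2 := by omega
    have e3 : (N : ℝ) - R = p + 2 := by rw [hp]; push_cast; ring
    have hq := qc_succ N a R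
    have hd : HasDerivAt (fun u : ℝ => u ^ (p + 1) * (1 - u) ^ (R + 1))
        ((p + 1) * u ^ p * (1 - u) ^ (R + 1) + u ^ (p + 1) * ((R + 1) * (1 - u) ^ R * (-1))) u := by
      have t1 := hasDerivAt_pow (p + 1) u
      have t2 := ((hasDerivAt_id u).const_sub 1).pow (R + 1)
      have t3 := t1.mul t2
      refine HasDerivAt.congr_deriv t3 ?_
      simp
    rw [hs]
    rw [e1]
    refine ⟨_, h1.add (hd.const_mul _), ?_⟩
    rw [e2] at h2
    simp only [kap] at h2 ⊢
    have e4 : (N : ℝ) - ((R + 1 : ℕ) : ℝ) = p + 1 := by push_cast; linarith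
    rw [e3] at hq h2
    rw [e4]
    linear_combination h2 - (u^(p+2) * (1-u)^R) * hq

noncomputable def Hf (N R : ℕ) (a u : ℝ) : ℝ := u ^ a * bt N R a u

lemma Hf_cont (N R : ℕ) (a : ℝ) (ha : 0 ≤ a) : Continuous (Hf N R a) := by
  unfold Hf
  exact (Real.continuous_rpow_const ha).mul (bt_cont N R a)

lemma Hf_deriv (N R : ℕ) (a u : ℝ) (hu : 0 < u) (hR : R < N) :
    HasDerivAt (Hf N R a) (kap N R a * (u ^ (a - 1) * (u ^ (N - R) * (1 - u) ^ R))) u := by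
  obtain ⟨b', h1, h2⟩ := bt_deriv N R a u hu hR
  have h3 := (Real.hasDerivAt_rpow_const (p := a) (Or.inl hu.ne')).mul h1
  refine HasDerivAt.congr_deriv h3 ?_
  have : u ^ a = u ^ (a - 1) * u := by
    rw [← Real.rpow_add_one hu.ne']; simp
  rw [this]
  linear_combination (u ^ (a - 1)) * h2

lemma Hf_one (N R : ℕ) (a : ℝ) : Hf N R a 1 = 1 := by simp [Hf, bt_one]

lemma Hf_nonneg (N R : ℕ) (a u : ℝ) (ha : 0 ≤ a) (hR : R < N) (h0 : 0 ≤ u) (h1 : u ≤ 1) :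
    0 ≤ Hf N R a u := mul_nonneg (Real.rpow_nonneg h0 _) (bt_nonneg N R a u ha hR h0 h1)

lemma Hf_zero (N R : ℕ) (a : ℝ) (hR : R < N) : Hf N R a 0 = 0 := by
  simp [Hf, bt_zero N R a hR]

/-- comparison of linear combinations on an interval -/
lemma Hf_cmp (N R : ℕ) (a a' x y A A' : ℝ) (ha : 0 ≤ a) (ha' : 0 ≤ a') (hR : R < N)
    (hx : 0 ≤ x) (hxy : x ≤ y) (hy : y ≤ 1)
    (h : ∀ u ∈ Set.Ioo x y, A * (kap N R a * u ^ (a - 1)) ≤ A' * (kap N R a' * u ^ (a' - 1))) :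
    A * Hf N R a y - A * Hf N R a x ≤ A' * Hf N R a' y - A' * Hf N R a' x := by
  have hm : MonotoneOn (fun u => A' * Hf N R a' u - A * Hf N R a u) (Set.Icc x y) := by
    apply monotoneOn_of_hasDerivWithinAt_nonneg (convex_Icc x y)
      (f' := fun u => A' * (kap N R a' * (u ^ (a' - 1) * (u ^ (N - R) * (1 - u) ^ R))) -
        A * (kap N R a * (u ^ (a - 1) * (u ^ (N - R) * (1 - u) ^ R))))
    · have := Hf_cont N R a ha
      have := Hf_cont N R a' ha'
      fun_prop
    · intro u hu
      rw [interior_Icc] at hu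
      have hu0 : 0 < u := lt_of_le_of_lt hx hu.1
      exact (((Hf_deriv N R a' u hu0 hR).const_mul A').sub
        ((Hf_deriv N R a u hu0 hR).const_mul A)).hasDerivWithinAt
    · intro u hu
      rw [interior_Icc] at hu
      have hu0 : 0 < u := lt_of_le_of_lt hx hu.1
      have hu1 : 0 ≤ 1 - u := by linarith [hu.2]
      have h3 := mul_le_mul_of_nonneg_right (h u hu)
        (by positivity : 0 ≤ u ^ (N - R) * (1 - u) ^ R)
      linarith
  have := hm (Set.left_mem_Icc.2 hxy) (Set.right_mem_Icc.2 hxy) hxy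
  simp only at this
  linarith

lemma Hf_le_one (N R : ℕ) (a u : ℝ) (ha : 0 ≤ a) (hR : R < N) (h0 : 0 ≤ u) (h1 : u ≤ 1) :
    Hf N R a u ≤ 1 := by
  have := Hf_cmp N R a a u 1 0 1 ha ha hR h0 h1 le_rfl (by
    intro v hv
    have := kap_pos N R a ha hR
    have : 0 < v := lt_of_le_of_lt h0 hv.1
    rw [zero_mul]; positivity)
  rw [Hf_one] at this
  linarith

lemma Hf_tail (N R : ℕ) (a s u : ℝ) (ha : 0 ≤ a) (hs : 0 ≤ s) (hR : R < N) (h0 : 0 < u)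
    (h1 : u ≤ 1) : 1 - Hf N R a u ≤ kap N R a / kap N R (a + s) * u ^ (-s) := by
  have k1 := kap_pos N R a ha hR
  have k2 := kap_pos N R (a + s) (by linarith) hR
  set A := kap N R a / kap N R (a + s) * u ^ (-s) with hA
  have hA0 : 0 ≤ A := by positivity
  have := Hf_cmp N R a (a + s) u 1 1 A ha (by linarith) hR h0.le h1 le_rfl (by
    intro v hv
    have hv0 : 0 < v := lt_trans h0 hv.1
    have e : A * (kap N R (a + s) * v ^ (a + s - 1)) =
        kap N R a * v ^ (a - 1) * (u ^ (-s) * v ^ s) := by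
      rw [hA, show a + s - 1 = (a - 1) + s by ring, Real.rpow_add hv0]
      field_simp
    rw [e, one_mul]
    have : 1 ≤ u ^ (-s) * v ^ s := by
      rw [Real.rpow_neg h0.le, ← div_eq_inv_mul, one_le_div (Real.rpow_pos_of_pos h0 _)]
      exact Real.rpow_le_rpow h0.le hv.1.le hs
    exact le_mul_of_one_le_right (by positivity) this)
  rw [Hf_one, Hf_one] at this
  have := mul_nonneg hA0 (Hf_nonneg N R (a + s) u (by linarith) hR h0.le h1)
  linarith

lemma Hf_sup (N R : ℕ) (a b u : ℝ) (hb : 0 ≤ b) (hab : b ≤ a) (hR : R < N) (h0 : 0 < u)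
    (h1 : u ≤ 1) : u ^ (-b) * Hf N R a u ≤ kap N R a / kap N R (a - b) := by
  have k1 := kap_pos N R a (by linarith) hR
  have k2 := kap_pos N R (a - b) (by linarith) hR
  set A := kap N R a / kap N R (a - b) with hA
  have hA0 : 0 ≤ A := by positivity
  have := Hf_cmp N R a (a - b) 0 u (u ^ (-b)) A (by linarith) (by linarith) hR le_rfl h0.le h1 (by
    intro v hv
    have hv0 : 0 < v := hv.1
    have e : A * (kap N R (a - b) * v ^ (a - b - 1)) =
        kap N R a * v ^ (a - 1) * (v ^ (-b)) := by
      rw [hA, show a - b - 1 = (a - 1) + -b by ring, Real.rpow_add hv0]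
      field_simp
    rw [e]
    have : u ^ (-b) ≤ v ^ (-b) := Real.rpow_le_rpow_of_nonpos hv0 hv.2.le (by linarith)
    calc u ^ (-b) * (kap N R a * v ^ (a - 1)) = (kap N R a * v ^ (a - 1)) * u ^ (-b) := by ring
      _ ≤ _ := mul_le_mul_of_nonneg_left this (by positivity))
  rw [Hf_zero _ _ _ hR, Hf_zero _ _ _ hR] at this
  have := mul_le_mul_of_nonneg_left (Hf_le_one N R (a - b) u (by linarith) hR h0.le h1) hA0
  linarith

lemma kap_eq (N R : ℕ) (a : ℝ) :
    kap N R a = (∏ i ∈ Finset.range (R + 1), ((N : ℝ) - i + a)) / (R.factorial : ℝ) := by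
  unfold kap qc
  rw [Finset.prod_range_succ]; ring

lemma kap_upper (N R : ℕ) (a b : ℝ) (hb : 0 ≤ b) (hab : b ≤ a) (hR : R + 1 < N) :
    kap N R a / kap N R (a - b) ≤ (((N : ℝ) + (a - b)) / ((N : ℝ) - R - 1 + (a - b))) ^ b := by
  rw [kap_eq, kap_eq, div_div_div_cancel_right₀ (by positivity), ← Finset.prod_div_distrib]
  induction R with
  | zero =>
    have hN : (1 : ℝ) < N := by exact_mod_cast hR
    simp only [zero_add, Finset.prod_range_one, Nat.cast_zero, sub_zero]
    set x := (N : ℝ) + (a - b) with hx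
    have hx1 : 1 < x := by linarith
    rw [show (N : ℝ) + a = x + b by rw [hx]; ring, show (N : ℝ) - 1 + (a - b) = x - 1 by rw [hx]; ring]
    have h1 : (x + b) / x ≤ Real.exp (b / x) := by
      have := Real.add_one_le_exp (b / x)
      rw [add_div, div_self (by linarith)]; linarith
    refine h1.trans ?_
    have h2 : 0 < x / (x - 1) := div_pos (by linarith) (by linarith)
    rw [Real.rpow_def_of_pos h2]
    apply Real.exp_le_exp.2
    have h3 := Real.one_sub_inv_le_log_of_pos h2
    have h4 : 1 - (x / (x - 1))⁻¹ = 1 / x := by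
      have : x ≠ 0 := by linarith
      rw [inv_div]; field_simp; ring
    rw [h4] at h3
    calc b / x = 1 / x * b := by ring
      _ ≤ _ := mul_le_mul_of_nonneg_right h3 hb
  | succ R ih =>
    rw [Finset.prod_range_succ]
    have ih := ih (by omega)
    have hN : (R : ℝ) + 2 < N := by exact_mod_cast hR
    set x := (N : ℝ) - R - 1 + (a - b) with hx
    have hx1 : 1 < x := by linarith
    have h1 : ((N : ℝ) - ((R + 1 : ℕ) : ℝ) + a) / ((N : ℝ) - ((R + 1 : ℕ) : ℝ) + (a - b)) ≤
        (x / (x - 1)) ^ b := by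
      rw [show (N : ℝ) - ((R + 1 : ℕ) : ℝ) + a = x + b by rw [hx]; push_cast; ring,
        show (N : ℝ) - ((R + 1 : ℕ) : ℝ) + (a - b) = x by rw [hx]; push_cast; ring]
      have h1 : (x + b) / x ≤ Real.exp (b / x) := by
        have := Real.add_one_le_exp (b / x)
        rw [add_div, div_self (by linarith)]; linarith
      refine h1.trans ?_
      have h2 : 0 < x / (x - 1) := div_pos (by linarith) (by linarith)
      rw [Real.rpow_def_of_pos h2]
      apply Real.exp_le_exp.2
      have h3 := Real.one_sub_inv_le_log_of_pos h2
      have h4 : 1 - (x / (x - 1))⁻¹ = 1 / x := by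
        have : x ≠ 0 := by linarith
        rw [inv_div]; field_simp; ring
      rw [h4] at h3
      calc b / x = 1 / x * b := by ring
        _ ≤ _ := mul_le_mul_of_nonneg_right h3 hb
    have h2 : 0 ≤ ((N : ℝ) - ((R + 1 : ℕ) : ℝ) + a) / ((N : ℝ) - ((R + 1 : ℕ) : ℝ) + (a - b)) := by
      apply div_nonneg <;> push_cast <;> linarith
    refine (mul_le_mul ih h1 h2 (Real.rpow_nonneg (div_nonneg (by linarith) (by linarith)) _)).trans ?_
    rw [← Real.mul_rpow (div_nonneg (by linarith) (by linarith)) (div_nonneg (by linarith) (by linarith))]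
    apply le_of_eq
    congr 1
    rw [show (N : ℝ) - ((R + 1 : ℕ) : ℝ) - 1 + (a - b) = x - 1 by rw [hx]; push_cast; ring]
    field_simp

lemma kap_lower (N R : ℕ) (a s : ℝ) (ha : 0 ≤ a) (hs : 0 ≤ s) (hR : R < N) :
    kap N R a / kap N R (a + s) ≤ (((N : ℝ) - R + a + s) / ((N : ℝ) + 1 + a + s)) ^ s := by
  have key : ∀ y : ℝ, 0 < y → s ≤ y → (y - s) / y ≤ (y / (y + 1)) ^ s := by
    intro y hy hsy
    have h1 : (y - s) / y ≤ Real.exp (-(s / y)) := by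
      have := Real.add_one_le_exp (-(s / y))
      rw [sub_div, div_self (by linarith)]; linarith
    refine h1.trans ?_
    have h2 : 0 < y / (y + 1) := by positivity
    rw [Real.rpow_def_of_pos h2]
    apply Real.exp_le_exp.2
    have h3 := Real.one_sub_inv_le_log_of_pos h2
    have h4 : 1 - (y / (y + 1))⁻¹ = -(1 / y) := by
      rw [inv_div]; field_simp; ring
    rw [h4] at h3
    calc -(s / y) = -(1 / y) * s := by ring
      _ ≤ _ := mul_le_mul_of_nonneg_right h3 hs
  rw [kap_eq, kap_eq, div_div_div_cancel_right₀ (by positivity), ← Finset.prod_div_distrib]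
  induction R with
  | zero =>
    have hN : (0 : ℝ) < N := by exact_mod_cast hR
    simp only [zero_add, Finset.prod_range_one, Nat.cast_zero, sub_zero]
    have := key (N + a + s) (by linarith) (by linarith)
    convert this using 2 <;> ring
  | succ R ih =>
    rw [Finset.prod_range_succ]
    have ih := ih (by omega)
    have hN : (R : ℝ) + 1 < N := by exact_mod_cast hR
    have h1 := key ((N : ℝ) - R - 1 + a + s) (by linarith) (by linarith)
    have h2 : 0 ≤ ((N : ℝ) - ((R + 1 : ℕ) : ℝ) + a) / ((N : ℝ) - ((R + 1 : ℕ) : ℝ) + (a + s)) := by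
      apply div_nonneg <;> push_cast <;> linarith
    have h3 : ((N : ℝ) - ((R + 1 : ℕ) : ℝ) + a) / ((N : ℝ) - ((R + 1 : ℕ) : ℝ) + (a + s)) ≤
      (((N : ℝ) - R - 1 + a + s) / ((N : ℝ) - R - 1 + a + s + 1)) ^ s := by
      convert h1 using 2 <;> push_cast <;> ring
    refine (mul_le_mul ih h3 h2 (Real.rpow_nonneg (div_nonneg (by linarith) (by linarith)) _)).trans ?_
    rw [← Real.mul_rpow (div_nonneg (by linarith) (by linarith)) (div_nonneg (by linarith) (by linarith))]
    apply le_of_eq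
    congr 1
    have d1 : (N : ℝ) + 1 + a + s ≠ 0 := by linarith
    have d2 : (N : ℝ) - R - 1 + a + s + 1 ≠ 0 := by linarith
    rw [show (N : ℝ) - R + a + s = (N : ℝ) - R - 1 + a + s + 1 by ring]
    field_simp
    push_cast
    ring


/-- the high-degree polynomial -/
noncomputable def Dp (N R σ : ℕ) (a A : ℝ) : ℝ[X] :=
  C A * X ^ σ * ∑ r ∈ Finset.range (R + 1), C (qc N a r) * ((X ^ 2) ^ (N - r) * (1 - X ^ 2) ^ r)

lemma Dp_eval (N R σ : ℕ) (a A x : ℝ) :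
    (Dp N R σ a A).eval x = A * x ^ σ * bt N R a (x ^ 2) := by
  simp [Dp, bt, eval_finsetSum]

lemma Dp_aeval (N R σ : ℕ) (a A : ℝ) (z : ℂ) :
    aeval z (Dp N R σ a A) = A * z ^ σ *
      ∑ r ∈ Finset.range (R + 1), (qc N a r : ℂ) * ((z ^ 2) ^ (N - r) * (1 - z ^ 2) ^ r) := by
  simp [Dp, map_sum]

lemma norm_cos_sin (θ η : ℝ) :
    ‖Complex.cos (θ + η * Complex.I)‖ ^ 2 + ‖Complex.sin (θ + η * Complex.I)‖ ^ 2 =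
      Real.cosh (2 * η) := by
  rw [Complex.cos_add_mul_I, Complex.sin_add_mul_I, ← Complex.ofReal_cos, ← Complex.ofReal_sin,
    ← Complex.ofReal_cosh, ← Complex.ofReal_sinh, Complex.sq_norm, Complex.sq_norm,
    Complex.normSq_apply, Complex.normSq_apply]
  simp [-Complex.ofReal_cos, -Complex.ofReal_sin, -Complex.ofReal_cosh, -Complex.ofReal_sinh]
  rw [Real.cosh_two_mul]
  have h1 := Real.sin_sq_add_cos_sq θ
  linear_combination (Real.cosh η ^ 2 + Real.sinh η ^ 2) * h1

lemma Dp_strip (N R σ : ℕ) (a A B : ℝ) (hσ : σ ≤ 1) (ha : 0 ≤ a) (hA : 0 ≤ A) (hR : R < N)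
    (hB : ∀ x ∈ Set.Icc (0 : ℝ) 1, A * x ^ σ * bt N R a (x ^ 2) ≤ B) (θ η : ℝ) :
    ‖aeval (Complex.cos (θ + η * Complex.I)) (Dp N R σ a A)‖ ≤ Real.cosh (2 * η) ^ (N + 1) * B := by
  have hS := norm_cos_sin θ η
  set z := Complex.cos (θ + η * Complex.I) with hz
  set S := Real.cosh (2 * η) with hSd
  set w := ‖z‖ with hw
  set v := ‖Complex.sin (θ + η * Complex.I)‖ with hv
  have hw0 : 0 ≤ w := norm_nonneg _
  have hv0 : 0 ≤ v := norm_nonneg _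
  have hS1 : 1 ≤ S := Real.one_le_cosh _
  have hSp : 0 < S := by linarith
  have hone : ‖1 - z ^ 2‖ = v ^ 2 := by
    rw [hv, ← norm_pow]
    congr 1
    rw [hz]
    linear_combination -Complex.sin_sq_add_cos_sq (θ + η * Complex.I)
  set q := Real.sqrt S with hq
  have hq1 : 1 ≤ q := Real.one_le_sqrt.2 hS1
  have hqp : 0 < q := by linarith
  have hqS : q ^ 2 = S := Real.sq_sqrt hSp.le
  set x := w / q with hx
  have hx0 : 0 ≤ x := by positivity
  have hx2 : S * x ^ 2 = w ^ 2 := by rw [hx, div_pow, hqS]; field_simp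
  have hx3 : S * (1 - x ^ 2) = v ^ 2 := by linarith
  have hx1 : x ≤ 1 := by
    rw [hx, div_le_one hqp]
    apply le_of_sq_le_sq _ hqp.le |> fun h => h
    rw [hqS]; nlinarith [sq_nonneg v]
  have hb := hB x ⟨hx0, hx1⟩
  have hx4 : 0 ≤ 1 - x ^ 2 := by nlinarith
  have hbt0 := bt_nonneg N R a (x ^ 2) ha hR (by positivity) (by linarith)
  rw [Dp_aeval, norm_mul, norm_mul, norm_pow, Complex.norm_real, Real.norm_of_nonneg hA]
  have h1 : ‖∑ r ∈ Finset.range (R + 1), (qc N a r : ℂ) * ((z ^ 2) ^ (N - r) * (1 - z ^ 2) ^ r)‖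
      ≤ S ^ N * bt N R a (x ^ 2) := by
    refine (norm_sum_le _ _).trans ?_
    unfold bt
    rw [Finset.mul_sum]
    apply Finset.sum_le_sum
    intro r hr
    have hrN : r ≤ N := by simp at hr; omega
    rw [norm_mul, norm_mul, norm_pow, norm_pow, norm_pow, Complex.norm_real,
      Real.norm_of_nonneg (qc_pos N a ha r hrN).le, hone, ← hw, ← hx2, ← hx3, mul_pow, mul_pow]
    apply le_of_eq
    have : S ^ N = S ^ (N - r) * S ^ r := by rw [← pow_add, Nat.sub_add_cancel hrN]
    rw [this]; ring
  have h2 : w ^ σ ≤ S * x ^ σ := by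
    have : σ = 0 ∨ σ = 1 := by omega
    rcases this with rfl | rfl
    · simpa using hS1
    · have : w = q * x := by rw [hx]; field_simp
      rw [pow_one, pow_one, this]
      apply mul_le_mul_of_nonneg_right _ hx0
      nlinarith
  calc A * w ^ σ * _ ≤ A * (S * x ^ σ) * (S ^ N * bt N R a (x ^ 2)) := by
        gcongr
    _ = S ^ (N + 1) * (A * x ^ σ * bt N R a (x ^ 2)) := by ring
    _ ≤ _ := by gcongr

lemma Dp_sup (N R σ : ℕ) (c δ x : ℝ) (hc : 0 < c) (hδ : 0 < δ) (hR : R < N)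
    (hx : x ∈ Set.Icc (0 : ℝ) 1) :
    δ ^ c / 2 * x ^ σ * bt N R ((c + σ) / 2) (x ^ 2) ≤
      δ ^ c / 2 * (kap N R ((c + σ) / 2) / kap N R (σ / 2)) := by
  have hA : 0 < δ ^ c := Real.rpow_pos_of_pos hδ _
  have hσ0 : (0 : ℝ) ≤ σ := Nat.cast_nonneg _
  rcases hx.1.eq_or_lt with h0 | h0
  · rw [← h0]
    simp only [ne_eq, OfNat.ofNat_ne_zero, not_false_eq_true, zero_pow, bt_zero N R _ hR, mul_zero]
    have := kap_pos N R ((c + σ) / 2) (by positivity) hR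
    have := kap_pos N R (σ / 2) (by positivity) hR
    positivity
  · have := Hf_sup N R ((c + σ) / 2) (c / 2) (x ^ 2) (by linarith) (by linarith) hR (by positivity)
      (pow_le_one₀ h0.le hx.2)
    rw [show (c + σ) / 2 - c / 2 = (σ : ℝ) / 2 by ring] at this
    have e : (x ^ 2) ^ (-(c / 2)) * Hf N R ((c + σ) / 2) (x ^ 2) =
        x ^ σ * bt N R ((c + σ) / 2) (x ^ 2) := by
      unfold Hf
      rw [← mul_assoc, ← Real.rpow_add (by positivity), ← Real.rpow_natCast x 2,
        ← Real.rpow_mul h0.le, ← Real.rpow_natCast x σ]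
      congr 2
      push_cast; ring
    rw [e] at this
    rw [mul_assoc]
    gcongr

lemma Dp_approx (N R σ : ℕ) (c δ s e x : ℝ) (hc : 0 < c) (hδ : 0 < δ) (hR : R < N)
    (hs : 0 ≤ s)
    (he : kap N R ((c + σ) / 2) / kap N R ((c + σ) / 2 + s) * (δ ^ 2) ^ (-s) ≤ e)
    (hx : x ∈ Set.Icc δ 1) :
    |δ ^ c / 2 * x ^ σ * bt N R ((c + σ) / 2) (x ^ 2) - δ ^ c / 2 * x ^ (-c)| ≤ e / 2 := by
  have hx0 : 0 < x := lt_of_lt_of_le hδ hx.1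
  have hσ0 : (0 : ℝ) ≤ σ := Nat.cast_nonneg _
  have ha : (0 : ℝ) ≤ (c + σ) / 2 := by positivity
  have hu1 : x ^ 2 ≤ 1 := pow_le_one₀ hx0.le hx.2
  have e1 : x ^ σ * bt N R ((c + σ) / 2) (x ^ 2) = x ^ (-c) * Hf N R ((c + σ) / 2) (x ^ 2) := by
    unfold Hf
    rw [← Real.rpow_natCast x 2, ← Real.rpow_mul hx0.le, ← mul_assoc, ← Real.rpow_add hx0,
      ← Real.rpow_natCast x σ]
    congr 2
    push_cast; ring
  have h1 := Hf_tail N R ((c + σ) / 2) s (x ^ 2) ha hs hR (by positivity) hu1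
  have h2 := Hf_le_one N R ((c + σ) / 2) (x ^ 2) ha hR (by positivity) hu1
  have k1 := kap_pos N R ((c + σ) / 2) ha hR
  have k2 := kap_pos N R ((c + σ) / 2 + s) (by linarith) hR
  have h3 : (x ^ 2) ^ (-s) ≤ (δ ^ 2) ^ (-s) :=
    Real.rpow_le_rpow_of_nonpos (by positivity) (by have := hx.1; gcongr) (by linarith)
  have h4 : 1 - Hf N R ((c + σ) / 2) (x ^ 2) ≤ e := h1.trans (le_trans (by gcongr) he)
  have h5 : δ ^ c * x ^ (-c) ≤ 1 := by
    rw [Real.rpow_neg hx0.le, ← div_eq_mul_inv, div_le_one (Real.rpow_pos_of_pos hx0 _)]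
    exact Real.rpow_le_rpow hδ.le hx.1 hc.le
  have h6 : 0 ≤ δ ^ c * x ^ (-c) := by positivity
  rw [mul_assoc, e1, show δ ^ c / 2 * (x ^ (-c) * Hf N R ((c + σ) / 2) (x ^ 2)) - δ ^ c / 2 * x ^ (-c)
    = -((δ ^ c * x ^ (-c)) * (1 - Hf N R ((c + σ) / 2) (x ^ 2)) / 2) by ring, abs_neg,
    abs_of_nonneg (by have : 0 ≤ 1 - Hf N R ((c + σ) / 2) (x ^ 2) := by linarith
                      positivity)]
  nlinarith

lemma symmetrize (P : ℝ[X]) (σ : ℕ) : ∃ Q : ℝ[X], Q.natDegree ≤ P.natDegree ∧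
    (∀ i : ℕ, i % 2 ≠ σ % 2 → Q.coeff i = 0) ∧
    ∀ x, Q.eval x = (P.eval x + (-1) ^ σ * P.eval (-x)) / 2 := by
  refine ⟨C (1/2) * (P + C ((-1) ^ σ) * P.comp (C (-1) * X)), ?_, ?_, ?_⟩
  · refine (natDegree_C_mul_le _ _).trans ?_
    refine (natDegree_add_le _ _).trans ?_
    apply max_le le_rfl
    refine (natDegree_C_mul_le _ _).trans ?_
    refine natDegree_comp_le.trans ?_
    have : (C (-1 : ℝ) * X).natDegree ≤ 1 := (natDegree_C_mul_le _ _).trans natDegree_X_le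
    nlinarith
  · intro i hi
    rw [coeff_C_mul, coeff_add, coeff_C_mul, comp_C_mul_X_coeff]
    have : ((-1 : ℝ)) ^ σ * (-1) ^ i = -1 := by
      rw [← pow_add]
      apply Odd.neg_one_pow
      rw [Nat.odd_iff]; omega
    linear_combination (1/2 * P.coeff i) * this
  · intro x
    simp
    ring

set_option maxHeartbeats 1600000 in
/-- choice of the parameters `N`, `R`, `s` -/
lemma params (ε δ c L c' : ℝ) (σ : ℕ) (hσ : σ ≤ 1) (hδ : 0 < δ) (hδ2 : δ ≤ 1 / 2)
    (hc : 0 < c) (hc' : 1 ≤ c') (hcc : c ≤ c') (hL : 0.69 ≤ L) (hε : ε = Real.exp (-L)) :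
    ∃ N R : ℕ, ∃ s : ℝ, 0 ≤ s ∧ R + 1 < N ∧
      kap N R ((c + σ) / 2) / kap N R ((c + σ) / 2 + s) * (δ ^ 2) ^ (-s) ≤ ε ∧
      δ ^ c / 2 * (kap N R ((c + σ) / 2) / kap N R (σ / 2)) ≤ 3 / 4 ∧
      ((N : ℝ) + 1) * δ ^ 2 ≤ 50 * (c' ^ 2 * L) := by
  have hσ0 : (0 : ℝ) ≤ σ := Nat.cast_nonneg _
  have hσ1 : (σ : ℝ) ≤ 1 := by exact_mod_cast hσ
  set a : ℝ := (c + σ) / 2 with ha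
  have ha0 : 0 ≤ a := by positivity
  have hac : a ≤ c' := by rw [ha]; linarith
  set s : ℝ := 5 * c' * L with hs
  have hs0 : 0 < s := by positivity
  set T : ℝ := c' ^ 2 * L with hT
  have hc2 : c' ≤ c' ^ 2 := by nlinarith
  have hcL : 0.69 * c' ≤ c' * L := by nlinarith
  have hcT : c' * L ≤ T := by rw [hT]; gcongr
  have hT1 : 0.69 ≤ T := by nlinarith
  have hT2 : 0.69 * c' ^ 2 ≤ T := by rw [hT]; nlinarith
  have hT3 : c' * (c' * L) = T := by rw [hT]; ring
  obtain ⟨m, hm1, hm2⟩ : ∃ m : ℕ, 30 * T ≤ m ∧ (m : ℝ) < 30 * T + 1 :=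
    ⟨⌈30 * T⌉₊, Nat.le_ceil _, Nat.ceil_lt_add_one (by linarith)⟩
  set γ : ℝ := 1 / (4 * c') with hγ
  have hγ0 : 0 < γ := by positivity
  have hγc : γ * c' = 1 / 4 := by rw [hγ]; field_simp
  have hγ4 : γ ≤ 1 / 4 := by nlinarith
  set W : ℝ := (1 + γ) * (m + a + s) with hW
  have hm0 : (0 : ℝ) ≤ m := Nat.cast_nonneg _
  have hW0 : 0 ≤ W := by positivity
  have hd2 : 0 < δ ^ 2 := by positivity
  have hd4 : δ ^ 2 ≤ 1 / 4 := by nlinarith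
  obtain ⟨N, hN1, hN2⟩ : ∃ N : ℕ, W / δ ^ 2 ≤ N ∧ (N : ℝ) < W / δ ^ 2 + 1 :=
    ⟨⌈W / δ ^ 2⌉₊, Nat.le_ceil _, Nat.ceil_lt_add_one (by positivity)⟩
  rw [div_le_iff₀ hd2] at hN1
  have hN3 : N * δ ^ 2 ≤ W + δ ^ 2 := by
    have : W / δ ^ 2 * δ ^ 2 = W := by field_simp
    nlinarith
  have hmW : m + a + s ≤ W := by rw [hW]; nlinarith
  have hN0 : (0 : ℝ) ≤ N := Nat.cast_nonneg _
  have hmN : m ≤ N := by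
    have : (m : ℝ) ≤ N := by nlinarith
    exact_mod_cast this
  have hm3 : 3 ≤ m := by
    have : (3 : ℝ) ≤ m := by linarith
    exact_mod_cast this
  have hm3' : (3 : ℝ) ≤ m := by exact_mod_cast hm3
  have hR : ((N - m : ℕ) : ℝ) = N - m := by push_cast [hmN]; ring
  have hRN : N - m + 1 < N := by omega
  have hNp : (0 : ℝ) < N := by
    have : 0 < N := by omega
    exact_mod_cast this
  refine ⟨N, N - m, s, hs0.le, hRN, ?_, ?_, ?_⟩
  · have h1 := kap_lower N (N - m) a s ha0 hs0.le (by omega)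
    rw [hR] at h1
    have h2 : ((N : ℝ) - (N - m) + a + s) / ((N : ℝ) + 1 + a + s) ≤ δ ^ 2 / (1 + γ) := by
      rw [div_le_div_iff₀ (by positivity) (by positivity)]
      have : 0 ≤ δ ^ 2 * (1 + a + s) := by positivity
      have e : ((N : ℝ) - (N - m) + a + s) * (1 + γ) = W := by rw [hW]; ring
      have e' : δ ^ 2 * ((N : ℝ) + 1 + a + s) = N * δ ^ 2 + δ ^ 2 * (1 + a + s) := by ring
      rw [e, e']; linarith
    have h3 : kap N (N - m) a / kap N (N - m) (a + s) ≤ (δ ^ 2 / (1 + γ)) ^ s := by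
      refine h1.trans ?_
      apply Real.rpow_le_rpow _ h2 hs0.le
      apply div_nonneg <;> linarith
    calc _ ≤ (δ ^ 2 / (1 + γ)) ^ s * (δ ^ 2) ^ (-s) := by gcongr
      _ = (1 + γ) ^ (-s) := by
        rw [Real.div_rpow hd2.le (by positivity), Real.rpow_neg hd2.le, Real.rpow_neg (by positivity)]
        have : (δ ^ 2) ^ s ≠ 0 := (Real.rpow_pos_of_pos hd2 _).ne'
        field_simp
      _ ≤ ε := by
        rw [hε, Real.rpow_def_of_pos (by positivity)]
        apply Real.exp_le_exp.2
        have h4 := Real.one_sub_inv_le_log_of_pos (by positivity : 0 < 1 + γ)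
        have h5 : 1 / (5 * c') ≤ 1 - (1 + γ)⁻¹ := by
          have : 1 - (1 + γ)⁻¹ = 1 / (4 * c' + 1) := by
            rw [hγ]; field_simp; ring
          rw [this]
          apply one_div_le_one_div_of_le (by positivity); linarith
        have h6 : 1 / (5 * c') * s = L := by rw [hs]; field_simp
        have := mul_le_mul_of_nonneg_right (h5.trans h4) hs0.le
        linarith
  · have h1 := kap_upper N (N - m) a (c / 2) (by linarith) (by rw [ha]; linarith) hRN
    have e : a - c / 2 = (σ : ℝ) / 2 := by rw [ha]; ring
    rw [hR, e] at h1
    have hden : 0 < (N : ℝ) - (N - m) - 1 + σ / 2 := by linarith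
    have h2 : δ ^ 2 * (((N : ℝ) + σ / 2) / ((N : ℝ) - (N - m) - 1 + σ / 2)) ≤ 1 + 0.8 / c' := by
      rw [← mul_div_assoc, div_le_iff₀ hden]
      have k1 : δ ^ 2 * ((N : ℝ) + σ / 2) ≤ W + 0.375 := by
        have : δ ^ 2 * ((N : ℝ) + σ / 2) = N * δ ^ 2 + δ ^ 2 * σ / 2 := by ring
        have : δ ^ 2 * σ ≤ 1 / 4 * 1 := mul_le_mul hd4 hσ1 hσ0 (by norm_num)
        linarith
      have k2 : W + 0.375 ≤ (1 + 0.8 / c') * (m - 1) := by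
        have : c' * (W + 0.375) ≤ (c' + 0.8) * (m - 1) := by
          have e1 : c' * W = (c' + 1 / 4) * (m + a + s) := by
            rw [hW]; linear_combination (m + a + s) * hγc
          have e2 : (c' + 1 / 4) * (a + s) ≤ 1.25 * c' * (c' + s) := by
            apply mul_le_mul <;> linarith
          have e3 : c' * s = 5 * T := by rw [hs, hT]; ring
          nlinarith
        have e4 : (1 + 0.8 / c') * (m - 1) = ((c' + 0.8) * (m - 1)) / c' := by field_simp
        rw [e4, le_div_iff₀ (by positivity)]; linarith
      refine k1.trans (k2.trans ?_)
      apply mul_le_mul_of_nonneg_left _ (by positivity)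
      linarith
    have hfr : 0 ≤ ((N : ℝ) + σ / 2) / ((N : ℝ) - (N - m) - 1 + σ / 2) := by positivity
    have h3 : δ ^ c * (kap N (N - m) a / kap N (N - m) (σ / 2)) ≤ 3 / 2 := by
      calc _ ≤ δ ^ c * (((N : ℝ) + σ / 2) / ((N : ℝ) - (N - m) - 1 + σ / 2)) ^ (c / 2) := by gcongr
        _ = (δ ^ 2 * (((N : ℝ) + σ / 2) / ((N : ℝ) - (N - m) - 1 + σ / 2))) ^ (c / 2) := by
          rw [Real.mul_rpow hd2.le hfr]
          congr 1
          rw [← Real.rpow_natCast δ 2, ← Real.rpow_mul hδ.le]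
          congr 1; push_cast; ring
        _ ≤ (Real.exp (0.8 / c')) ^ (c / 2) := by
          apply Real.rpow_le_rpow (by positivity) _ (by linarith)
          have := Real.add_one_le_exp (0.8 / c')
          linarith
        _ = Real.exp (0.8 / c' * (c / 2)) := by rw [← Real.exp_mul]
        _ ≤ Real.exp (0.4) := by
          apply Real.exp_le_exp.2
          rw [div_mul_eq_mul_div, div_le_iff₀ (by positivity)]; linarith
        _ ≤ 3 / 2 := by
          have := Real.exp_bound' (x := 0.4) (by norm_num) (by norm_num) (n := 4) (by norm_num)
          norm_num [Finset.sum_range_succ, Nat.factorial] at this ⊢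
          linarith
    linarith
  · have : W ≤ 1.25 * (m + a + s) := by
      rw [hW]; apply mul_le_mul_of_nonneg_right _ (by positivity); linarith
    have e : ((N : ℝ) + 1) * δ ^ 2 = N * δ ^ 2 + δ ^ 2 := by ring
    have e2 : s ≤ 5 * T := by rw [hs]; linarith
    linarith

lemma tail_small (L y Nn η : ℝ) (N : ℕ) (hL : 0.69 ≤ L) (hL2 : 2 ≤ Real.exp L) (hy : 10 * L ≤ y)
    (hNn : Nn = (N : ℝ) + 1) (hN : Nn * η ^ 2 ≤ L / 2) :
    (1 + y) / Real.cosh y * (Real.cosh (2 * η) ^ (N + 1) * (3 / 4)) ≤ Real.exp (-L) / 2 := by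
  have hy0 : 0 < y := by linarith
  have h1 : (1 + y) / Real.cosh y ≤ 4 * Real.exp (-(y / 2)) := by
    rw [div_le_iff₀ (Real.cosh_pos _), Real.cosh_eq]
    have e1 := Real.add_one_le_exp (y / 2)
    have e2 : Real.exp (-(y/2)) * Real.exp y = Real.exp (y / 2) := by
      rw [← Real.exp_add]; congr 1; ring
    have e3 : 0 < Real.exp (-(y/2)) * Real.exp (-y) := by positivity
    nlinarith
  have h2 : Real.cosh (2 * η) ^ (N + 1) ≤ Real.exp L := by
    calc Real.cosh (2 * η) ^ (N + 1) ≤ (Real.exp ((2 * η) ^ 2 / 2)) ^ (N + 1) := by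
          gcongr
          exact Real.cosh_le_exp_half_sq _
      _ = Real.exp (Nn * ((2 * η) ^ 2 / 2)) := by
          rw [← Real.exp_nat_mul, hNn]; push_cast; rfl
      _ ≤ _ := by apply Real.exp_le_exp.2; nlinarith
  have h3 : Real.exp (-(y / 2)) ≤ Real.exp (-L) ^ 5 := by
    rw [← Real.exp_nat_mul]; apply Real.exp_le_exp.2; push_cast; linarith
  have hE : Real.exp (-L) * Real.exp L = 1 := by rw [← Real.exp_add]; simp
  set E := Real.exp (-L) with hEd
  have hE0 : 0 < E := Real.exp_pos _
  have hE2 : E ≤ 1 / 2 := by nlinarith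
  calc _ ≤ 4 * E ^ 5 * (Real.exp L * (3 / 4)) := by
        apply mul_le_mul (h1.trans (by linarith)) (by linarith) (by positivity) (by positivity)
    _ = 3 * E ^ 4 * (E * Real.exp L) := by ring
    _ = 3 * E ^ 3 * E := by rw [hE]; ring
    _ ≤ 3 * (1 / 2) ^ 3 * E := by gcongr
    _ ≤ E / 2 := by linarith

lemma main_par (ε δ c : ℝ) (σ : ℕ) (hσ : σ ≤ 1) (hε : ε ∈ Set.Ioc (0 : ℝ) (1 / 2))
    (hδ : δ ∈ Set.Ioc (0 : ℝ) (1 / 2)) (hc : 0 < c) :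
    ∃ P : ℝ[X], (∀ i : ℕ, i % 2 ≠ σ % 2 → P.coeff i = 0) ∧
      (P.natDegree : ℝ) ≤ 102 * (max 1 c / δ) * Real.log (1 / ε) ∧
      (∀ x : ℝ, x ∈ Set.Icc δ 1 → |P.eval x - δ ^ c / 2 * x ^ (-c)| ≤ ε) ∧
      (∀ x : ℝ, x ∈ Set.Icc (-1 : ℝ) 1 → |P.eval x| ≤ 1) := by
  obtain ⟨hε0, hε1⟩ := hε
  obtain ⟨hδ0, hδ1⟩ := hδ
  set L := Real.log (1 / ε) with hL
  have hexp : Real.exp L = 1 / ε := Real.exp_log (by positivity)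
  have hεL : ε = Real.exp (-L) := by rw [Real.exp_neg, hexp]; simp
  have h2ε : 2 ≤ 1 / ε := by rw [le_div_iff₀ hε0]; linarith
  have hL1 : 0.69 ≤ L := by
    have := Real.log_le_log (by norm_num) h2ε
    have := Real.log_two_gt_d9
    rw [hL]; linarith
  set c' := max 1 c with hc'
  have hc1 : 1 ≤ c' := le_max_left _ _
  have hc2 : c ≤ c' := le_max_right _ _
  obtain ⟨N, R, s, hs, hRN, p1, p2, p3⟩ :=
    params ε δ c L c' σ hσ hδ0 hδ1 hc hc1 hc2 hL1 hεL
  have hR : R < N := by omega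
  set A : ℝ := δ ^ c / 2 with hA
  have hA0 : 0 ≤ A := by positivity
  set a : ℝ := (c + σ) / 2 with ha
  have ha0 : 0 ≤ a := by positivity
  set η : ℝ := δ / (10 * c') with hη
  have hη0 : 0 < η := by positivity
  obtain ⟨n, hn1, hn2⟩ : ∃ n : ℕ, 100 * (c' / δ) * L ≤ n ∧ (n : ℝ) < 100 * (c' / δ) * L + 1 :=
    ⟨⌈100 * (c' / δ) * L⌉₊, Nat.le_ceil _, Nat.ceil_lt_add_one (by positivity)⟩
  have hy : 10 * L ≤ n * η := by
    calc 10 * L = 100 * (c' / δ) * L * η := by rw [hη]; field_simp; ring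
      _ ≤ _ := by gcongr
  have hNη : ((N : ℝ) + 1) * η ^ 2 ≤ L / 2 := by
    have : ((N : ℝ) + 1) * η ^ 2 = (((N : ℝ) + 1) * δ ^ 2) / (100 * c' ^ 2) := by
      rw [hη]; field_simp; ring
    rw [this, div_le_iff₀ (by positivity)]
    linarith
  have hcosh : Real.cosh η + 1 ≤ Real.cosh (n * η) ^ 2 := by
    have h1 : η ≤ n * η := by
      have : η ≤ 1 := by rw [hη, div_le_one (by positivity)]; linarith
      linarith
    have h2 : Real.cosh η ≤ Real.cosh (n * η) := by
      rw [Real.cosh_le_cosh, abs_of_pos hη0, abs_of_pos (by linarith)]; exact h1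
    have h3 : 2 ≤ Real.cosh (n * η) := by
      rw [Real.cosh_eq]
      have := Real.add_one_le_exp (n * η)
      have := Real.exp_pos (-(n * η))
      linarith
    nlinarith
  have hB : ∀ x ∈ Set.Icc (0 : ℝ) 1, A * x ^ σ * bt N R a (x ^ 2) ≤ 3 / 4 :=
    fun x hx => (Dp_sup N R σ c δ x hc hδ0 hR hx).trans p2
  obtain ⟨P, hP1, hP2⟩ := reduction (Dp N R σ a A) n η _ hη0 hcosh
    (fun θ => Dp_strip N R σ a A (3 / 4) hσ ha0 hA0 hR hB θ η)
  have hsm := tail_small L (n * η) _ η N hL1 (by rw [hexp]; exact h2ε) hy rfl hNη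
  rw [← hεL] at hsm
  obtain ⟨Q, hQ1, hQ2, hQ3⟩ := symmetrize P σ
  have hneg : ∀ x, (Dp N R σ a A).eval (-x) = (-1) ^ σ * (Dp N R σ a A).eval x := by
    intro x
    rw [Dp_eval, Dp_eval, neg_pow x σ]; simp; ring
  have hsgn : ((-1 : ℝ) ^ σ) * (-1) ^ σ = 1 := by
    rw [← mul_pow]; simp
  have hQD : ∀ x ∈ Set.Icc (-1 : ℝ) 1, |Q.eval x - (Dp N R σ a A).eval x| ≤ ε / 2 := by
    intro x hx
    have q1 := (hP2 x hx).trans hsm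
    have q2 := (hP2 (-x) ⟨by linarith [hx.2], by linarith [hx.1]⟩).trans hsm
    have e : Q.eval x - (Dp N R σ a A).eval x = ((P.eval x - (Dp N R σ a A).eval x) +
        (-1) ^ σ * (P.eval (-x) - (Dp N R σ a A).eval (-x))) / 2 := by
      rw [hQ3, hneg]
      linear_combination ((Dp N R σ a A).eval x / 2) * hsgn
    rw [e, abs_div, abs_two]
    have := abs_add_le (P.eval x - (Dp N R σ a A).eval x)
        ((-1) ^ σ * (P.eval (-x) - (Dp N R σ a A).eval (-x)))
    rw [abs_mul, abs_pow, abs_neg, abs_one, one_pow, one_mul] at this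
    linarith
  refine ⟨Q, hQ2, ?_, ?_, ?_⟩
  · have h1 : (Q.natDegree : ℝ) ≤ n := by exact_mod_cast hQ1.trans hP1
    have h2 : 1 ≤ 2 * (c' / δ) * L := by
      have : 2 ≤ c' / δ := by rw [le_div_iff₀ hδ0]; linarith
      nlinarith
    linarith
  · intro x hx
    have q1 := hQD x ⟨by linarith [hx.1], hx.2⟩
    have q2 := Dp_approx N R σ c δ s ε x hc hδ0 hR hs p1 hx
    rw [Dp_eval] at q1
    have := abs_sub_le (Q.eval x) (A * x ^ σ * bt N R a (x ^ 2)) (A * x ^ (-c))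
    linarith
  · intro x hx
    have q1 := hQD x hx
    have q2 : |(Dp N R σ a A).eval x| ≤ 3 / 4 := by
      rw [Dp_eval]
      have hx1 : |x| ≤ 1 := abs_le.2 hx
      have h0 := hB |x| ⟨abs_nonneg _, hx1⟩
      rw [sq_abs] at h0
      have hb := bt_nonneg N R a (x ^ 2) ha0 hR (by positivity) (by rw [← sq_abs]; exact pow_le_one₀ (abs_nonneg _) hx1)
      rw [abs_mul, abs_mul, abs_of_nonneg hA0, abs_pow, abs_of_nonneg hb]
      exact h0
    have := abs_sub_abs_le_abs_sub (Q.eval x) ((Dp N R σ a A).eval x)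
    linarith

end NegPow



/-- Polynomial approximations of negative power functions: for `ε, δ ∈ (0,1/2]`, `c > 0`,
and `f(x) = (δ^c/2)·x^{−c}`, there exist an even polynomial `P` and an odd polynomial `P′`
of degree `O((max(1,c)/δ)·log(1/ε))` that `ε`-approximate `f` on `[δ,1]` and are bounded by
`1` on `[−1,1]`. -/
theorem negative_power_poly_approx :
    ∃ K : ℝ, 0 < K ∧
      ∀ ε δ : ℝ, ε ∈ Set.Ioc (0 : ℝ) (1 / 2) → δ ∈ Set.Ioc (0 : ℝ) (1 / 2) →
        ∀ c : ℝ, 0 < c →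
          ∃ P P' : Polynomial ℝ,
            (∀ i : ℕ, i % 2 = 1 → P.coeff i = 0) ∧
            (∀ i : ℕ, i % 2 = 0 → P'.coeff i = 0) ∧
            (P.natDegree : ℝ) ≤ K * (max 1 c / δ) * Real.log (1 / ε) ∧
            (P'.natDegree : ℝ) ≤ K * (max 1 c / δ) * Real.log (1 / ε) ∧
            (∀ x : ℝ, x ∈ Set.Icc δ 1 →
              |P.eval x - δ ^ c / 2 * x ^ (-c)| ≤ ε) ∧
            (∀ x : ℝ, x ∈ Set.Icc δ 1 →
              |P'.eval x - δ ^ c / 2 * x ^ (-c)| ≤ ε) ∧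
            (∀ x : ℝ, x ∈ Set.Icc (-1 : ℝ) 1 → |P.eval x| ≤ 1) ∧
            (∀ x : ℝ, x ∈ Set.Icc (-1 : ℝ) 1 → |P'.eval x| ≤ 1) := by
  refine ⟨102, by norm_num, ?_⟩
  intro ε δ hε hδ c hc
  obtain ⟨P, p1, p2, p3, p4⟩ := NegPow.main_par ε δ c 0 (by norm_num) hε hδ hc
  obtain ⟨P', q1, q2, q3, q4⟩ := NegPow.main_par ε δ c 1 (by norm_num) hε hδ hc
  exact ⟨P, P', fun i hi => p1 i (by omega), fun i hi => q1 i (by omega), p2, q2, p3, q3, p4, q4⟩
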